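/- Let G_s(x) = (4πs)^{−1/2} exp(−x²/(4s)) for s > 0, x ∈ ℝ. For every T > 0 there exists a constant C_T < ∞ such that for all t with 0 < t ≤ T and all x with |x| ≤ 1, Σ_{j∈ℤ, j≠0} ∫₀^t |∂_x G_{t−τ}(x − 2j)| dτ ≤ C_T. -/

import Mathlib

open MeasureTheory intervalIntegral

/-- One-dimensional Gauss (heat) kernel `G_s(x) = (4πs)^{−1/2} exp(−x²/(4s))`. -/
noncomputable def heatKernel (s x : ℝ) : ℝ :=
  (4 * Real.pi * s) ^ (-(1 : ℝ) / 2) * Real.exp (-x ^ 2 / (4 * s))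

/-- The spatial derivative of the heat kernel, `∂ₓ G_s(y) = −(y/(2s)) G_s(y)`. -/
theorem hasDerivAt_heatKernel {s : ℝ} (hs : s ≠ 0) (y : ℝ) :
    HasDerivAt (heatKernel s) (-(y / (2 * s)) * heatKernel s y) y := by
  have h : HasDerivAt (fun y : ℝ => -y ^ 2 / (4 * s)) (-(2 * y) / (4 * s)) y := by
    simpa using ((hasDerivAt_pow 2 y).neg.div_const (4 * s))
  refine (h.exp.const_mul ((4 * Real.pi * s) ^ (-(1 : ℝ) / 2))).congr_deriv ?_
  unfold heatKernel
  field_simp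
  ring

theorem heatKernel_nonneg {s : ℝ} (hs : 0 ≤ s) (y : ℝ) : 0 ≤ heatKernel s y := by
  unfold heatKernel
  positivity

/-- Polynomial decay of the heat kernel away from the origin. -/
theorem heatKernel_le {s y : ℝ} (hs : 0 < s) (hy : y ≠ 0) :
    heatKernel s y ≤ 32 * s ^ 2 / (√s * y ^ 4) := by
  have hprefactor : (4 * Real.pi * s) ^ (-(1 : ℝ) / 2) ≤ 1 / √s := by
    rw [neg_div, Real.rpow_neg (by positivity), ← Real.sqrt_eq_rpow, ← one_div]
    gcongr
    nlinarith [Real.pi_gt_three]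
  have hexp : Real.exp (-y ^ 2 / (4 * s)) ≤ 32 * s ^ 2 / y ^ 4 := by
    have hquad := Real.quadratic_le_exp_of_nonneg (x := y ^ 2 / (4 * s)) (by positivity)
    have hle : (y ^ 2 / (4 * s)) ^ 2 / 2 ≤ Real.exp (y ^ 2 / (4 * s)) := by
      have : 0 ≤ y ^ 2 / (4 * s) := by positivity
      linarith
    rw [neg_div, Real.exp_neg]
    calc (Real.exp (y ^ 2 / (4 * s)))⁻¹ ≤ ((y ^ 2 / (4 * s)) ^ 2 / 2)⁻¹ :=
          inv_anti₀ (by positivity) hle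
      _ = 32 * s ^ 2 / y ^ 4 := by
          field_simp
          norm_num
  calc heatKernel s y ≤ 1 / √s * (32 * s ^ 2 / y ^ 4) := by
        unfold heatKernel
        gcongr
    _ = 32 * s ^ 2 / (√s * y ^ 4) := by field_simp

theorem abs_deriv_heatKernel_le {s y : ℝ} (hs : 0 ≤ s) (hy : y ≠ 0) :
    |deriv (heatKernel s) y| ≤ 16 * √s / |y| ^ 3 := by
  rcases hs.eq_or_lt with rfl | hs
  · have : heatKernel 0 = fun _ => 0 := by
      funext z
      norm_num [heatKernel]
    simp [this]
  · have hy' : 0 < |y| := abs_pos.mpr hy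
    rw [(hasDerivAt_heatKernel hs.ne' y).deriv, abs_mul, abs_neg, abs_div,
      abs_of_pos (by positivity : 0 < 2 * s), abs_of_nonneg (heatKernel_nonneg hs.le y)]
    calc |y| / (2 * s) * heatKernel s y
        ≤ |y| / (2 * s) * (32 * s ^ 2 / (√s * y ^ 4)) := by
          gcongr
          exact heatKernel_le hs hy
      _ = 16 * √s / |y| ^ 3 := by
          rw [← (by decide : Even 4).pow_abs y]
          have hsqrt : 0 < √s := Real.sqrt_pos.mpr hs
          field_simp
          rw [Real.sq_sqrt hs.le]
          ring

theorem abs_int_le_abs_sub_two_mul {x : ℝ} (hx : |x| ≤ 1) {j : ℤ} (hj : j ≠ 0) :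
    |(j : ℝ)| ≤ |x - 2 * (j : ℝ)| := by
  have hone : (1 : ℝ) ≤ |(j : ℝ)| := by exact_mod_cast Int.one_le_abs hj
  have htri := abs_sub_abs_le_abs_sub (2 * (j : ℝ)) x
  rw [abs_mul, abs_two, abs_sub_comm] at htri
  linarith

/-- Every non-central lattice translate contributes at most a multiple of `1 / j ^ 2`. -/
theorem integral_abs_deriv_heatKernel_le {T t x : ℝ} (ht : 0 < t) (htT : t ≤ T) (hx : |x| ≤ 1)
    {j : ℤ} (hj : j ≠ 0) :
    (∫ τ in (0:ℝ)..t, |deriv (heatKernel (t - τ)) (x - 2 * (j : ℝ))|) ≤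
      16 * √T * T * (1 / (j : ℝ) ^ 2) := by
  have hone : (1 : ℝ) ≤ |(j : ℝ)| := by exact_mod_cast Int.one_le_abs hj
  have hle := abs_int_le_abs_sub_two_mul hx hj
  have hne : x - 2 * (j : ℝ) ≠ 0 := abs_pos.mp (by linarith)
  have hbound : ∀ τ ∈ Set.uIoc 0 t, ‖|deriv (heatKernel (t - τ)) (x - 2 * (j : ℝ))|‖ ≤
      16 * √T * (1 / (j : ℝ) ^ 2) := by
    intro τ hτ
    rw [Set.uIoc_of_le ht.le] at hτ
    rw [Real.norm_eq_abs, abs_abs]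
    calc |deriv (heatKernel (t - τ)) (x - 2 * (j : ℝ))|
        ≤ 16 * √(t - τ) / |x - 2 * (j : ℝ)| ^ 3 :=
          abs_deriv_heatKernel_le (sub_nonneg.mpr hτ.2) hne
      _ ≤ 16 * √T / |(j : ℝ)| ^ 2 := by
          gcongr
          · linarith [hτ.1]
          · calc |(j : ℝ)| ^ 2 ≤ |(j : ℝ)| ^ 3 := pow_le_pow_right₀ hone (by norm_num)
              _ ≤ |x - 2 * (j : ℝ)| ^ 3 := by gcongr
      _ = 16 * √T * (1 / (j : ℝ) ^ 2) := by rw [sq_abs, mul_one_div]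
  calc (∫ τ in (0:ℝ)..t, |deriv (heatKernel (t - τ)) (x - 2 * (j : ℝ))|)
      ≤ 16 * √T * (1 / (j : ℝ) ^ 2) * |t - 0| :=
        (le_abs_self _).trans (norm_integral_le_of_norm_le_const hbound)
    _ ≤ 16 * √T * (1 / (j : ℝ) ^ 2) * T := by
        rw [sub_zero, abs_of_pos ht]
        gcongr
    _ = 16 * √T * T * (1 / (j : ℝ) ^ 2) := by ring

/-- Uniform bound for the far-field lattice sum of derivatives of the
heat kernel: for each `T > 0` there is `C_T < ∞` such that for all `0 < t ≤ T` and
`|x| ≤ 1`, `Σ_{j ≠ 0} ∫₀^t |∂ₓ G_{t−τ}(x − 2j)| dτ ≤ C_T`. -/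
theorem lattice_sum_deriv_heatKernel_bound (T : ℝ) (hT : 0 < T) :
    ∃ C : ℝ, ∀ t : ℝ, 0 < t → t ≤ T → ∀ x : ℝ, |x| ≤ 1 →
      ∑' j : {j : ℤ // j ≠ 0},
        (∫ τ in (0:ℝ)..t, |deriv (fun y => heatKernel (t - τ) y) (x - 2 * ((j : ℤ) : ℝ))|) ≤ C := by
  have hsum : Summable fun j : {j : ℤ // j ≠ 0} => 16 * √T * T * (1 / ((j : ℤ) : ℝ) ^ 2) :=
    (((Real.summable_one_div_int_pow (p := 2)).mpr one_lt_two).subtype _).mul_left _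
  refine ⟨∑' j : {j : ℤ // j ≠ 0}, 16 * √T * T * (1 / ((j : ℤ) : ℝ) ^ 2), ?_⟩
  intro t ht htT x hx
  have hle := fun j : {j : ℤ // j ≠ 0} => integral_abs_deriv_heatKernel_le ht htT hx j.2
  refine (hsum.of_nonneg_of_le (fun j => ?_) hle).tsum_le_tsum hle hsum
  exact integral_nonneg ht.le fun _ _ => abs_nonneg _
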